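/- Let ϑ₁, ϑ₂ be Beurling weights on ℝ^d and 1 ≤ p₁, p₂, q, r₁, r₂ < ∞. If p₂ ≤ p₁ and r₁ ≤ r₂, then A^{p₁,1,q,r₁}_{ϑ₁,ϑ₂}(ℝ^d) is continuously embedded in A^{p₂,1,q,r₂}_{ϑ₁,ϑ₂}(ℝ^d): every f ∈ A^{p₁,1,q,r₁}_{ϑ₁,ϑ₂}(ℝ^d) belongs to A^{p₂,1,q,r₂}_{ϑ₁,ϑ₂}(ℝ^d) and there exists C > 0 (independent of f) with ‖f‖_{A^{p₂,1,q,r₂}_{ϑ₁,ϑ₂}} ≤ C·‖f‖_{A^{p₁,1,q,r₁}_{ϑ₁,ϑ₂}}. -/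

import Mathlib

open MeasureTheory Filter Topology
open scoped ENNReal NNReal BigOperators

noncomputable section

/-- The unit cube `α + [0,1)^d` at the integer point `α ∈ ℤ^d`. -/
def cube {d : ℕ} (α : Fin d → ℤ) : Set (Fin d → ℝ) :=
  Set.univ.pi fun i => Set.Ico (α i : ℝ) ((α i : ℝ) + 1)

/-- The weighted amalgam norm `‖f‖_{pq,ω}` of the space `(L^p_ω, ℓ^q)`. -/
def amalgamNorm {d : ℕ} (p q : ℝ) (ω : (Fin d → ℝ) → ℝ) (f : (Fin d → ℝ) → ℂ) : ℝ≥0∞ :=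
  (∑' α : Fin d → ℤ,
      (eLpNorm (fun x => ω x • f x) (ENNReal.ofReal p) (volume.restrict (cube α))) ^ q) ^ (1 / q)

/-- Membership in the weighted amalgam space `(L^p_ω, ℓ^q)`. -/
def MemAmalgam {d : ℕ} (p q : ℝ) (ω : (Fin d → ℝ) → ℝ) (f : (Fin d → ℝ) → ℂ) : Prop :=
  Measurable f ∧ amalgamNorm p q ω f < ⊤

/-- A Beurling weight: measurable, `ϑ ≥ 1` and submultiplicative. -/
def IsBeurling {d : ℕ} (ϑ : (Fin d → ℝ) → ℝ) : Prop :=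
  Measurable ϑ ∧ (∀ x, 1 ≤ ϑ x) ∧ ∀ x y, ϑ (x + y) ≤ ϑ x * ϑ y

/-- The Fourier transform `f̂(ξ) = ∫ f(x) e^{-2πi⟨x,ξ⟩} dx`. -/
def fourierT {d : ℕ} (f : (Fin d → ℝ) → ℂ) (ξ : Fin d → ℝ) : ℂ :=
  ∫ x : Fin d → ℝ,
    Complex.exp (-(2 * (Real.pi : ℂ) * Complex.I * ∑ i, (x i : ℂ) * (ξ i : ℂ))) * f x

/-- The norm of `A^{p,1,q,r}_{ϑ₁,ϑ₂}(ℝ^d)`. -/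
def ANorm {d : ℕ} (p q r : ℝ) (ϑ₁ ϑ₂ : (Fin d → ℝ) → ℝ) (f : (Fin d → ℝ) → ℂ) : ℝ≥0∞ :=
  amalgamNorm p 1 ϑ₁ f + amalgamNorm q r ϑ₂ (fourierT f)

/-- Membership in `A^{p,1,q,r}_{ϑ₁,ϑ₂}(ℝ^d)`. -/
def MemA {d : ℕ} (p q r : ℝ) (ϑ₁ ϑ₂ : (Fin d → ℝ) → ℝ) (f : (Fin d → ℝ) → ℂ) : Prop :=
  MemAmalgam p 1 ϑ₁ f ∧ MemAmalgam q r ϑ₂ (fourierT f)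

/-- Convolution `(f∗g)(x) = ∫ f(x−t)g(t) dt`. -/
def convF {d : ℕ} (f g : (Fin d → ℝ) → ℂ) (x : Fin d → ℝ) : ℂ :=
  ∫ t : Fin d → ℝ, f (x - t) * g t

/-- `ϑ ≺ ϑ'` : domination of weights up to a constant. -/
def Prec {d : ℕ} (ϑ ϑ' : (Fin d → ℝ) → ℝ) : Prop :=
  ∃ C : ℝ, 0 < C ∧ ∀ x, ϑ x ≤ C * ϑ' x

/-- The Beurling–Domar condition `∑_{n≥1} log ϑ(nx)/n² < ∞`. -/
def BeurlingDomar {d : ℕ} (ϑ : (Fin d → ℝ) → ℝ) : Prop :=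
  ∀ x : Fin d → ℝ, Summable fun n : ℕ => Real.log (ϑ ((n : ℝ) • x)) / (n : ℝ) ^ 2

/-- `w` does not tend to zero as `|x| → ∞`. -/
def NotVanishingAtInfty {d : ℕ} (w : (Fin d → ℝ) → ℝ) : Prop :=
  ∃ δ : ℝ, 0 < δ ∧ ∀ R : ℝ, 0 < R → ∃ x : Fin d → ℝ, R < ‖x‖ ∧ δ ≤ w x

end

/-!
Each cube `α + [0,1)^d` has measure one, so the local `L^p` norms increase with `p`; the `ℓ^q`
norms of a sequence decrease with `q`. Applied to `f` and `f̂`, these two facts give the embedding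
with constant `1`.
-/

theorem tsum_rpow_le_rpow_tsum {ι : Type*} (a : ι → ℝ≥0∞) {t : ℝ} (ht : 1 ≤ t) :
    ∑' i, a i ^ t ≤ (∑' i, a i) ^ t := by
  have rpow_eq_mul (b : ℝ≥0∞) : b ^ t = b * b ^ (t - 1) := by
    conv_rhs => rw [← ENNReal.rpow_one b, ← ENNReal.rpow_mul, one_mul,
      ← ENNReal.rpow_add_of_nonneg _ _ zero_le_one (sub_nonneg.2 ht), add_sub_cancel]
  calc ∑' i, a i ^ t = ∑' i, a i * a i ^ (t - 1) := by simp only [rpow_eq_mul]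
    _ ≤ ∑' i, a i * (∑' j, a j) ^ (t - 1) := by
        gcongr with i
        exact ENNReal.le_tsum i
    _ = (∑' i, a i) ^ t := by rw [ENNReal.tsum_mul_right, ← rpow_eq_mul]

theorem antitoneOn_rpow_tsum_rpow {ι : Type*} (a : ι → ℝ≥0∞) :
    AntitoneOn (fun r : ℝ => (∑' i, a i ^ r) ^ (1 / r)) (Set.Ioi 0) := by
  intro r (hr : 0 < r) s (hs : 0 < s) hrs
  calc (∑' i, a i ^ s) ^ (1 / s) = (∑' i, (a i ^ r) ^ (s / r)) ^ (1 / s) := by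
        simp only [← ENNReal.rpow_mul, mul_div_cancel₀ s hr.ne']
    _ ≤ ((∑' i, a i ^ r) ^ (s / r)) ^ (1 / s) := by
        gcongr
        exact tsum_rpow_le_rpow_tsum _ ((one_le_div hr).2 hrs)
    _ = (∑' i, a i ^ r) ^ (1 / r) := by
        rw [← ENNReal.rpow_mul]
        congr 1
        field_simp

section Amalgam

variable {d : ℕ}

theorem volume_cube (α : Fin d → ℤ) : volume (cube α) = 1 := by
  simp [cube, volume_pi_pi]

instance isProbabilityMeasure_restrict_cube (α : Fin d → ℤ) :
    IsProbabilityMeasure (volume.restrict (cube α)) :=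
  ⟨by rw [Measure.restrict_apply_univ, volume_cube]⟩

variable {p₁ p₂ q₁ q₂ r₁ r₂ : ℝ} {ω ϑ₁ ϑ₂ : (Fin d → ℝ) → ℝ} {f : (Fin d → ℝ) → ℂ}

theorem monotone_amalgamNorm_left {q : ℝ} (hq : 0 ≤ q)
    (hωf : AEStronglyMeasurable (fun x => ω x • f x)) :
    Monotone fun p => amalgamNorm p q ω f := by
  intro p₂ p₁ hp
  simp only [amalgamNorm]
  gcongr with α
  exact eLpNorm_le_eLpNorm_of_exponent_le (ENNReal.ofReal_le_ofReal hp) hωf.restrict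

theorem antitoneOn_amalgamNorm_right (p : ℝ) (ω : (Fin d → ℝ) → ℝ) (f : (Fin d → ℝ) → ℂ) :
    AntitoneOn (fun q => amalgamNorm p q ω f) (Set.Ioi 0) :=
  antitoneOn_rpow_tsum_rpow _

theorem amalgamNorm_le_of_exponents (hωf : AEStronglyMeasurable (fun x => ω x • f x))
    (hp : p₂ ≤ p₁) (hq : q₁ ∈ Set.Ioc 0 q₂) :
    amalgamNorm p₂ q₂ ω f ≤ amalgamNorm p₁ q₁ ω f :=
  calc amalgamNorm p₂ q₂ ω f ≤ amalgamNorm p₂ q₁ ω f :=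
        antitoneOn_amalgamNorm_right p₂ ω f hq.1 (hq.1.trans_le hq.2) hq.2
    _ ≤ amalgamNorm p₁ q₁ ω f := monotone_amalgamNorm_left hq.1.le hωf hp

/-- If `p₁ < 1` or `|ϑ₁|` is not bounded away from `0`, `f` need not be integrable, and then
`fourierT f` is the junk value `0`. -/
theorem A_embedding_exponents_general (hϑ₁ : Measurable ϑ₁) (hϑ₂ : Measurable ϑ₂)
    (hp : p₂ ∈ Set.Ioc 0 p₁) (hq : q₂ ∈ Set.Ioc 0 q₁) (hr : r₁ ∈ Set.Ioc 0 r₂)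
    (hf : MemA p₁ q₁ r₁ ϑ₁ ϑ₂ f) :
    MemA p₂ q₂ r₂ ϑ₁ ϑ₂ f ∧ ANorm p₂ q₂ r₂ ϑ₁ ϑ₂ f ≤ ANorm p₁ q₁ r₁ ϑ₁ ϑ₂ f := by
  obtain ⟨⟨f_meas, f_fin⟩, fourier_meas, fourier_fin⟩ := hf
  have f_le : amalgamNorm p₂ 1 ϑ₁ f ≤ amalgamNorm p₁ 1 ϑ₁ f :=
    monotone_amalgamNorm_left zero_le_one (hϑ₁.smul f_meas).aestronglyMeasurable hp.2
  have fourier_le : amalgamNorm q₂ r₂ ϑ₂ (fourierT f) ≤ amalgamNorm q₁ r₁ ϑ₂ (fourierT f) :=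
    amalgamNorm_le_of_exponents (hϑ₂.smul fourier_meas).aestronglyMeasurable hq.2 hr
  exact ⟨⟨⟨f_meas, f_le.trans_lt f_fin⟩, fourier_meas, fourier_le.trans_lt fourier_fin⟩,
    add_le_add f_le fourier_le⟩

end Amalgam

/-- if `p₂ ≤ p₁` and `r₁ ≤ r₂` then
`A^{p₁,1,q,r₁}_{ϑ₁,ϑ₂}(ℝ^d) ↪ A^{p₂,1,q,r₂}_{ϑ₁,ϑ₂}(ℝ^d)` continuously. -/
theorem A_embedding_exponents {d : ℕ} (p₁ p₂ q r₁ r₂ : ℝ)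
    (hp₁ : 1 ≤ p₁) (hp₂ : 1 ≤ p₂) (hq : 1 ≤ q) (hr₁ : 1 ≤ r₁) (hr₂ : 1 ≤ r₂)
    (hp : p₂ ≤ p₁) (hr : r₁ ≤ r₂)
    (ϑ₁ ϑ₂ : (Fin d → ℝ) → ℝ) (h1 : IsBeurling ϑ₁) (h2 : IsBeurling ϑ₂) :
    ∃ C : ℝ, 0 < C ∧ ∀ f : (Fin d → ℝ) → ℂ, MemA p₁ q r₁ ϑ₁ ϑ₂ f →
      MemA p₂ q r₂ ϑ₁ ϑ₂ f ∧
      ANorm p₂ q r₂ ϑ₁ ϑ₂ f ≤ ENNReal.ofReal C * ANorm p₁ q r₁ ϑ₁ ϑ₂ f := by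
  refine ⟨1, one_pos, fun f hf => ?_⟩
  simpa only [ENNReal.ofReal_one, one_mul] using
    A_embedding_exponents_general h1.1 h2.1 ⟨one_pos.trans_le hp₂, hp⟩ ⟨one_pos.trans_le hq, le_rfl⟩
      ⟨one_pos.trans_le hr₁, hr⟩ hf
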